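/- Let K be a finite extension of Q_p with ring of integers o_K, and let T = G_m^N denote the open subscheme of P^N_K consisting of points with all homogeneous coordinates nonzero. Given finitely many points y₁, …, y_r ∈ P^N(K̄), there exists an element g ∈ PGL_{N+1}(o_K) such that g(y₁), …, g(y_r) ∈ T(K̄). -/

import Mathlib

set_option linter.unusedVariables false

noncomputable section

variable (p : ℕ) [Fact p.Prime]

variable (K : Type) [Field K] [Algebra ℚ_[p] K] [FiniteDimensional ℚ_[p] K]

instance : Algebra ℤ_[p] K :=
  ((algebraMap ℚ_[p] K).comp (algebraMap ℤ_[p] ℚ_[p])).toAlgebra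

/-- The ring of integers `o_K` of a finite extension `K` of `ℚ_p`. -/
abbrev ringOfIntegers : Subalgebra ℤ_[p] K := integralClosure ℤ_[p] K

/-- The canonical ring homomorphism from `o_K` into the algebraic closure `K̄`. -/
def intToClosure : ringOfIntegers p K →+* AlgebraicClosure K :=
  (algebraMap K (AlgebraicClosure K)).comp (Subalgebra.val _).toRingHom

open Polynomial in
/-- Finitely many nonzero polynomials over a field of characteristic zero have a common
natural number at which none of them vanishes. -/
theorem exists_nat_eval_ne_zero {F ι : Type*} [Field F] [CharZero F] [Fintype ι]
    (f : ι → F[X]) (hf : ∀ a, f a ≠ 0) : ∃ n : ℕ, ∀ a, (f a).eval (n : F) ≠ 0 := by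
  by_contra! h
  have hprod : (∏ a, f a) ≠ 0 := Finset.prod_ne_zero_iff.2 fun a _ => hf a
  apply hprod
  apply Polynomial.eq_zero_of_infinite_isRoot
  apply (Set.infinite_range_of_injective (Nat.cast_injective (R := F))).mono
  rintro _ ⟨n, rfl⟩
  obtain ⟨a, ha⟩ := h n
  simp only [Set.mem_setOf_eq, IsRoot.def, eval_prod]
  exact Finset.prod_eq_zero (Finset.mem_univ a) ha

open Polynomial in
theorem exists_GL_mulVec_ne_zero {R F : Type*} [CommRing R] [Field F] [CharZero F] (φ : R →+* F)
    (N r : ℕ) (v : Fin r → Fin (N + 1) → F) (hv : ∀ a, v a ≠ 0) :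
    ∃ g : GL (Fin (N + 1)) R, ∀ a i,
      Matrix.mulVec ((g : Matrix (Fin (N + 1)) (Fin (N + 1)) R).map φ) (v a) i ≠ 0 := by
  -- step 1: make coordinate zero nonzero
  obtain ⟨t, ht⟩ := exists_nat_eval_ne_zero
    (fun a : Fin r => ∑ j : Fin (N + 1), C (v a j) * X ^ (j : ℕ)) (by
      intro a h
      apply hv a
      funext j
      have := congrArg (fun q => q.coeff (j : ℕ)) h
      simpa [finset_sum_coeff, coeff_C_mul, coeff_X_pow, Fin.val_inj] using this)
  let A : Matrix (Fin (N + 1)) (Fin (N + 1)) R :=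
    Matrix.of fun i j => if i = 0 then (t : R) ^ (j : ℕ) else if i = j then 1 else 0
  have hA : A.det = 1 := by
    rw [Matrix.det_of_upperTriangular]
    · apply Finset.prod_eq_one
      intro i _
      by_cases hi : i = 0 <;> simp [A, hi]
    · intro i j hij
      have hij' : j < i := hij
      have h0 : i ≠ 0 := (lt_of_le_of_lt (Fin.zero_le j) hij').ne'
      simp [A, h0, hij'.ne']
  let w : Fin r → Fin (N + 1) → F := fun a => (A.map φ).mulVec (v a)
  have hw : ∀ a, w a 0 ≠ 0 := by
    intro a
    have h2 : w a 0 = ∑ j : Fin (N + 1), (t : F) ^ (j : ℕ) * v a j := by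
      simp [w, A, Matrix.mulVec, dotProduct]
    have h1 := ht a
    rw [h2]
    simp only [eval_finsetSum, eval_mul, eval_C, eval_pow, eval_X] at h1
    simpa only [mul_comm] using h1
  -- step 2: add a multiple of coordinate zero to all others
  obtain ⟨s, hs⟩ := exists_nat_eval_ne_zero
    (fun q : Fin r × Fin (N + 1) => C (w q.1 q.2) + C (w q.1 0) * X) (by
      rintro ⟨a, i⟩ h
      apply hw a
      have := congrArg (fun q => q.coeff 1) h
      simpa [coeff_C] using this)
  let B : Matrix (Fin (N + 1)) (Fin (N + 1)) R :=
    Matrix.of fun i j => (if i = j then 1 else 0) + if i ≠ 0 ∧ j = 0 then (s : R) else 0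
  have hB : B.det = 1 := by
    rw [Matrix.det_of_lowerTriangular]
    · apply Finset.prod_eq_one
      intro i _
      by_cases hi : i = 0 <;> simp [B, hi]
    · intro i j hij
      have hij' : i < j := hij
      have h0 : j ≠ 0 := (lt_of_le_of_lt (Fin.zero_le i) hij').ne'
      simp [B, h0, hij'.ne]
  have hBA : IsUnit (B * A).det := by simp [hA, hB]
  refine ⟨Matrix.GeneralLinearGroup.mk'' (B * A) hBA, fun a i => ?_⟩
  have key : Matrix.mulVec ((B * A).map φ) (v a) i = (B.map φ).mulVec (w a) i := by
    rw [Matrix.map_mul, ← Matrix.mulVec_mulVec]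
  change Matrix.mulVec ((B * A).map φ) (v a) i ≠ 0
  rw [key]
  by_cases hi : i = 0
  · subst hi
    have : (B.map φ).mulVec (w a) 0 = w a 0 := by
      simp [B, Matrix.mulVec, dotProduct, apply_ite φ]
    rw [this]
    exact hw a
  · have : (B.map φ).mulVec (w a) i = w a i + w a 0 * s := by
      simp [B, Matrix.mulVec, dotProduct, apply_ite φ, hi, add_mul, Finset.sum_add_distrib,
        mul_comm]
    rw [this]
    simpa using hs (a, i)

/-- STATEMENT 19: Let `K` be a finite extension of `ℚ_p` with ring of
integers `o_K`, and let `T = 𝔾_mᴺ ⊆ ℙᴺ_K` be the locus where all homogeneous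
coordinates are nonzero.  Given finitely many points `y₁, …, y_r ∈ ℙᴺ(K̄)`,
there is an element `g` of `PGL_{N+1}(o_K)` (here represented by a lift in
`GL_{N+1}(o_K)`, acting on `ℙᴺ(K̄) = ℙ(K̄^{N+1})` through the coefficient
embedding `o_K → K̄`) such that `g(y₁), …, g(y_r)` all lie in `T(K̄)`, i.e.
every homogeneous coordinate of every `g(yₐ)` is nonzero. -/
theorem statement19 (N r : ℕ)
    (y : Fin r → Projectivization (AlgebraicClosure K)
      (Fin (N + 1) → AlgebraicClosure K)) :
    ∃ g : GL (Fin (N + 1)) (ringOfIntegers p K),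
      ∀ (α : Fin r) (i : Fin (N + 1)),
        Matrix.mulVec ((g : Matrix (Fin (N + 1)) (Fin (N + 1)) (ringOfIntegers p K)).map
          (intToClosure p K)) (y α).rep i ≠ 0 := by
  haveI : CharZero K := charZero_of_injective_algebraMap (algebraMap ℚ_[p] K).injective
  haveI : CharZero (AlgebraicClosure K) :=
    charZero_of_injective_algebraMap (algebraMap K (AlgebraicClosure K)).injective
  exact exists_GL_mulVec_ne_zero (intToClosure p K) N r (fun α => (y α).rep)
    (fun α => (y α).rep_nonzero)
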